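/- Let α, β, γ ∈ [0,1] satisfy 0 < β < 1, α/2 ≤ min{β, 1−β}, and γ/2 ≤ min{β, 1−β}. Then f_A(α,β) + f_D(β,γ) ≤ g(α,γ), where g(α,γ) equals f_A(α,γ) if α ≤ 2γ(1−γ); equals h(γ) − h(α) if 2γ(1−γ) ≤ α ≤ 1 − 2γ(1−γ); and equals f_A(1−α, γ) if α ≥ 1 − 2γ(1−γ). -/

import Mathlib

/-- Binary entropy function (base-2 logs), with the convention `0 * log 0 = 0`. -/
noncomputable def binEnt (x : ℝ) : ℝ :=
  -(x * Real.logb 2 x) - (1 - x) * Real.logb 2 (1 - x)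

/-- The spectral shape exponent of the accumulator:
`f_A(α,β) = α − h(β) + (1−α)·h((β−α/2)/(1−α))`. -/
noncomputable def fA (α β : ℝ) : ℝ :=
  α - binEnt β + (1 - α) * binEnt ((β - α / 2) / (1 - α))

/-- The spectral shape exponent of the discrete derivative:
`f_D(α,β) = (1−α)·h(β/(2(1−α))) + α·h(β/(2α)) − h(α)`. -/
noncomputable def fD (α β : ℝ) : ℝ :=
  (1 - α) * binEnt (β / (2 * (1 - α))) + α * binEnt (β / (2 * α)) - binEnt α

/-- The piecewise upper bound `g(α,γ)`: `f_A(α,γ)` if `α ≤ 2γ(1−γ)`,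
`h(γ) − h(α)` if `2γ(1−γ) ≤ α ≤ 1 − 2γ(1−γ)`, and `f_A(1−α,γ)` if `α ≥ 1 − 2γ(1−γ)`. -/
noncomputable def gBound (α γ : ℝ) : ℝ :=
  if α ≤ 2 * γ * (1 - γ) then fA α γ
  else if α ≤ 1 - 2 * γ * (1 - γ) then binEnt γ - binEnt α
  else fA (1 - α) γ

open Real

/-- The Shannon entropy (in nats) of a pair of bits, each equal to one with probability `b`, that
differ with probability `x`. -/
noncomputable def pairEntropy (x b : ℝ) : ℝ :=
  negMulLog (b - x / 2) + 2 * negMulLog (x / 2) + negMulLog (1 - b - x / 2)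

theorem log_two_mul_binEnt (x : ℝ) : log 2 * binEnt x = binEntropy x := by
  have h2 : log 2 ≠ 0 := (log_pos one_lt_two).ne'
  rw [binEntropy_eq_negMulLog_add_negMulLog_one_sub, binEnt, negMulLog, negMulLog, logb, logb]
  field_simp
  ring

/-- The grouping property of entropy. -/
theorem add_mul_binEntropy_div {a b : ℝ} (ha : 0 ≤ a) (hb : 0 ≤ b) :
    (a + b) * binEntropy (a / (a + b)) = negMulLog a + negMulLog b - negMulLog (a + b) := by
  rcases eq_or_ne (a + b) 0 with hs | hs
  · obtain rfl : a = 0 := by linarith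
    obtain rfl : b = 0 := by linarith
    simp
  · have key (t : ℝ) : (a + b) * negMulLog (t / (a + b)) = negMulLog t + t * log (a + b) := by
      rcases eq_or_ne t 0 with rfl | ht
      · simp
      · rw [negMulLog, negMulLog, log_div ht hs]
        field_simp
        ring
    have h1 : 1 - a / (a + b) = b / (a + b) := by field_simp; ring
    rw [binEntropy_eq_negMulLog_add_negMulLog_one_sub, h1, mul_add, key, key]
    simp only [negMulLog]
    ring

/-- Subadditivity of entropy for a pair of bits with joint distribution `a, b, c, d`. -/
theorem entropy_subadditive {a b c d : ℝ} (ha : 0 ≤ a) (hb : 0 ≤ b) (hc : 0 ≤ c) (hd : 0 ≤ d)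
    (h1 : a + b + c + d = 1) :
    negMulLog a + negMulLog b + negMulLog c + negMulLog d ≤
      binEntropy (a + b) + binEntropy (a + c) := by
  have div_mem {s t : ℝ} (hs : 0 ≤ s) (ht : 0 ≤ t) : s / (s + t) ∈ Set.Icc (0 : ℝ) 1 :=
    ⟨by positivity, div_le_one_of_le₀ (by linarith) (by positivity)⟩
  have cancel {s t : ℝ} (hs : 0 ≤ s) (ht : 0 ≤ t) : (s + t) * (s / (s + t)) = s := by
    rcases eq_or_ne (s + t) 0 with h | h
    · rw [h]
      linarith
    · field_simp
  have hconc := strictConcave_binEntropy.concaveOn.2 (div_mem ha hb) (div_mem hc hd)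
    (add_nonneg ha hb) (add_nonneg hc hd) (by linarith)
  simp only [smul_eq_mul] at hconc
  rw [cancel ha hb, cancel hc hd, add_mul_binEntropy_div ha hb, add_mul_binEntropy_div hc hd]
    at hconc
  have h3 := binEntropy_eq_negMulLog_add_negMulLog_one_sub (a + b)
  rw [show 1 - (a + b) = c + d by linarith] at h3
  linarith

theorem two_mul_negMulLog_half (x : ℝ) : 2 * negMulLog (x / 2) = negMulLog x + x * log 2 := by
  rcases eq_or_ne x 0 with rfl | hx
  · simp
  · rw [negMulLog, negMulLog, log_div hx two_ne_zero]
    ring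

section PairEntropy

variable {x b : ℝ}

theorem pairEntropy_le_two_mul (hx : 0 ≤ x) (h1 : x / 2 ≤ b) (h2 : x / 2 ≤ 1 - b) :
    pairEntropy x b ≤ 2 * binEntropy b := by
  have := entropy_subadditive (a := b - x / 2) (b := x / 2) (c := x / 2) (d := 1 - b - x / 2)
    (by linarith) (by linarith) (by linarith) (by linarith) (by ring)
  rw [sub_add_cancel] at this
  unfold pairEntropy
  linarith

theorem pairEntropy_le_add (hx : 0 ≤ x) (h1 : x / 2 ≤ b) (h2 : x / 2 ≤ 1 - b) :
    pairEntropy x b ≤ binEntropy x + binEntropy b := by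
  have := entropy_subadditive (a := x / 2) (b := x / 2) (c := b - x / 2) (d := 1 - b - x / 2)
    (by linarith) (by linarith) (by linarith) (by linarith) (by ring)
  rw [add_sub_cancel, add_halves] at this
  unfold pairEntropy
  linarith

theorem pairEntropy_eq (h1 : x / 2 ≤ b) (h2 : x / 2 ≤ 1 - b) :
    pairEntropy x b =
      binEntropy x + x * log 2 + (1 - x) * binEntropy ((b - x / 2) / (1 - x)) := by
  have h := add_mul_binEntropy_div (a := b - x / 2) (b := 1 - b - x / 2)
    (by linarith) (by linarith)
  rw [show b - x / 2 + (1 - b - x / 2) = 1 - x by ring] at h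
  rw [h, pairEntropy, two_mul_negMulLog_half, binEntropy_eq_negMulLog_add_negMulLog_one_sub]
  ring

theorem log_two_mul_fA (h1 : x / 2 ≤ b) (h2 : x / 2 ≤ 1 - b) :
    log 2 * fA x b = pairEntropy x b - binEntropy b - binEntropy x := by
  rw [pairEntropy_eq h1 h2, ← log_two_mul_binEnt, ← log_two_mul_binEnt, ← log_two_mul_binEnt, fA]
  ring

theorem log_two_mul_fD (hx : 0 ≤ x) (h1 : x / 2 ≤ b) (h2 : x / 2 ≤ 1 - b) :
    log 2 * fD b x = pairEntropy x b - 2 * binEntropy b := by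
  have hl := add_mul_binEntropy_div (a := x / 2) (b := b - x / 2) (by linarith) (by linarith)
  have hr := add_mul_binEntropy_div (a := x / 2) (b := 1 - b - x / 2) (by linarith) (by linarith)
  rw [add_sub_cancel, div_div] at hl hr
  have hb := binEntropy_eq_negMulLog_add_negMulLog_one_sub b
  have : log 2 * fD b x = (1 - b) * binEntropy (x / (2 * (1 - b))) + b * binEntropy (x / (2 * b))
      - binEntropy b := by
    rw [← log_two_mul_binEnt, ← log_two_mul_binEnt, ← log_two_mul_binEnt, fD]
    ring
  rw [this, hl, hr, pairEntropy]
  linarith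

/-- For independent bits the pair entropy is twice the entropy of a single bit. -/
theorem pairEntropy_two_mul_one_sub (b : ℝ) :
    pairEntropy (2 * b * (1 - b)) b = 2 * binEntropy b := by
  rw [pairEntropy, show b - 2 * b * (1 - b) / 2 = b * b by ring,
    show 2 * b * (1 - b) / 2 = b * (1 - b) by ring,
    show 1 - b - b * (1 - b) = (1 - b) * (1 - b) by ring,
    binEntropy_eq_negMulLog_add_negMulLog_one_sub]
  simp only [negMulLog_mul]
  ring

theorem pairEntropy_zero (b : ℝ) : pairEntropy 0 b = binEntropy b := by
  simp [pairEntropy, binEntropy_eq_negMulLog_add_negMulLog_one_sub]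

/-- Making the two bits mostly different costs entropy, compared with making them mostly equal. -/
theorem pairEntropy_le_pairEntropy_one_sub (hx : 1 / 2 ≤ x) (hx1 : x ≤ 1) (h1 : x / 2 ≤ b)
    (h2 : x / 2 ≤ 1 - b) : pairEntropy x b ≤ pairEntropy (1 - x) b := by
  rw [pairEntropy_eq h1 h2, pairEntropy_eq (x := 1 - x) (by linarith) (by linarith),
    binEntropy_one_sub, sub_sub_cancel]
  have hx0 : 0 < x := by linarith
  have hmem : (b - x / 2) / (1 - x) ∈ Set.Icc (0 : ℝ) 1 :=
    ⟨div_nonneg (by linarith) (by linarith), div_le_one_of_le₀ (by linarith) (by linarith)⟩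
  have hconc := strictConcave_binEntropy.concaveOn.2 hmem
    (show (2⁻¹ : ℝ) ∈ Set.Icc (0 : ℝ) 1 by constructor <;> norm_num)
    (show 0 ≤ (1 - x) / x from div_nonneg (by linarith) hx0.le)
    (show 0 ≤ (2 * x - 1) / x from div_nonneg (by linarith) hx0.le) (by field_simp; ring)
  simp only [smul_eq_mul, binEntropy_two_inv] at hconc
  have hpt : (1 - x) / x * ((b - x / 2) / (1 - x)) + (2 * x - 1) / x * 2⁻¹ =
      (b - (1 - x) / 2) / x := by
    have : (1 - x) * ((b - x / 2) / (1 - x)) = b - x / 2 := by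
      rcases eq_or_ne (1 - x) 0 with h | h
      · rw [h, zero_mul]
        linarith
      · field_simp
    rw [div_mul_eq_mul_div, this]
    field_simp
    ring
  rw [hpt] at hconc
  have h := mul_le_mul_of_nonneg_left hconc hx0.le
  rw [mul_add, ← mul_assoc, ← mul_assoc, mul_div_cancel₀ _ hx0.ne',
    mul_div_cancel₀ _ hx0.ne'] at h
  linarith

end PairEntropy

/-- If `b` is further from `1/2` than `c`, then the entropy of the pair grows faster with the
probability of a disagreement at `c` than at `b`. -/
theorem monotoneOn_pairEntropy_sub {b c : ℝ} (hbc : b * (1 - b) ≤ c * (1 - c)) (u : ℝ)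
    (hb : u / 2 ≤ b) (hb' : u / 2 ≤ 1 - b) (hc : u / 2 ≤ c) (hc' : u / 2 ≤ 1 - c) :
    MonotoneOn (fun x => pairEntropy x c - pairEntropy x b) (Set.Icc 0 u) := by
  have hcont (d : ℝ) : Continuous fun x => pairEntropy x d := by
    unfold pairEntropy
    fun_prop
  have hder (d x : ℝ) (hx : 0 < x) (h1 : x / 2 < d) (h2 : x / 2 < 1 - d) :
      HasDerivAt (fun x => pairEntropy x d)
        ((log (d - x / 2) + log (1 - d - x / 2)) / 2 - log (x / 2)) x := by
    have hh : HasDerivAt (fun x : ℝ => x / 2) (1 / 2) x := (hasDerivAt_id x).div_const 2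
    have e1 := (hasDerivAt_negMulLog (sub_pos.2 h1).ne').comp x (hh.const_sub d)
    have e2 := (hasDerivAt_negMulLog (half_pos hx).ne').comp x hh
    have e3 := (hasDerivAt_negMulLog (sub_pos.2 h2).ne').comp x (hh.const_sub (1 - d))
    exact ((e1.add (e2.const_mul 2)).add e3).congr_deriv (by ring)
  have hdiff : ∀ x ∈ interior (Set.Icc 0 u),
      HasDerivAt (fun x => pairEntropy x c - pairEntropy x b)
        ((log (c - x / 2) + log (1 - c - x / 2)) / 2 - log (x / 2) -
          ((log (b - x / 2) + log (1 - b - x / 2)) / 2 - log (x / 2))) x := by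
    intro x hx
    rw [interior_Icc] at hx
    obtain ⟨hx0, hxu⟩ := hx
    exact (hder c x hx0 (by linarith) (by linarith)).sub
      (hder b x hx0 (by linarith) (by linarith))
  refine monotoneOn_of_deriv_nonneg (convex_Icc 0 u) ((hcont c).sub (hcont b)).continuousOn
    (fun x hx => (hdiff x hx).differentiableAt.differentiableWithinAt) fun x hx => ?_
  rw [(hdiff x hx).deriv]
  rw [interior_Icc] at hx
  obtain ⟨hx0, hxu⟩ := hx
  have p1 : 0 < b - x / 2 := by linarith
  have p2 : 0 < 1 - b - x / 2 := by linarith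
  have p3 : 0 < c - x / 2 := by linarith
  have p4 : 0 < 1 - c - x / 2 := by linarith
  have hlog := log_le_log (mul_pos p1 p2)
    (show (b - x / 2) * (1 - b - x / 2) ≤ (c - x / 2) * (1 - c - x / 2) by linarith)
  rw [log_mul p1.ne' p2.ne', log_mul p3.ne' p4.ne'] at hlog
  linarith

theorem pairEntropy_add_le_of_le {α β γ : ℝ} (hα0 : 0 ≤ α) (hγ0 : 0 ≤ γ) (hγ1 : γ ≤ 1)
    (hβ : α / 2 ≤ β) (hβ' : α / 2 ≤ 1 - β) (hγβ : γ / 2 ≤ β) (hγβ' : γ / 2 ≤ 1 - β)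
    (hα : α ≤ 2 * γ * (1 - γ)) :
    pairEntropy α β + pairEntropy γ β - 3 * binEntropy β ≤ pairEntropy α γ - binEntropy γ := by
  have hc1 : γ * (1 - γ) ≤ γ := by nlinarith
  have hc2 : γ * (1 - γ) ≤ 1 - γ := by nlinarith
  rcases le_total (β * (1 - β)) (γ * (1 - γ)) with h | h
  · have hm := monotoneOn_pairEntropy_sub h α hβ hβ' (by linarith) (by linarith)
      (Set.left_mem_Icc.2 hα0) (Set.right_mem_Icc.2 hα0) hα0
    simp only [pairEntropy_zero] at hm
    linarith [pairEntropy_le_two_mul hγ0 hγβ hγβ']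
  · have hb1 : β * (1 - β) ≤ β := by nlinarith
    have hb2 : β * (1 - β) ≤ 1 - β := by nlinarith
    have hm := monotoneOn_pairEntropy_sub h (2 * γ * (1 - γ)) (by linarith) (by linarith)
      (by linarith) (by linarith) ⟨hα0, hα⟩ (Set.right_mem_Icc.2 (hα0.trans hα)) hα
    simp only [pairEntropy_two_mul_one_sub] at hm
    linarith [pairEntropy_le_add hγ0 hγβ hγβ',
      pairEntropy_le_two_mul (hα0.trans hα) (b := β) (by linarith) (by linarith)]

/-- `f_A(α,β) + f_D(β,γ) ≤ g(α,γ)` on the joint domain. -/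
theorem fAD_le_gBound (α β γ : ℝ)
    (hα0 : 0 ≤ α) (hα1 : α ≤ 1) (hβ0 : 0 ≤ β) (hβ1 : β ≤ 1) (hγ0 : 0 ≤ γ) (hγ1 : γ ≤ 1)
    (hβpos : 0 < β) (hβlt : β < 1)
    (hαdom : α / 2 ≤ min β (1 - β)) (hγdom : γ / 2 ≤ min β (1 - β)) :
    fA α β + fD β γ ≤ gBound α γ := by
  obtain ⟨hαβ, hαβ'⟩ := le_min_iff.1 hαdom
  obtain ⟨hγβ, hγβ'⟩ := le_min_iff.1 hγdom
  have hc1 : γ * (1 - γ) ≤ γ := by nlinarith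
  have hc2 : γ * (1 - γ) ≤ 1 - γ := by nlinarith
  refine le_of_mul_le_mul_left ?_ (log_pos one_lt_two)
  rw [mul_add, log_two_mul_fA hαβ hαβ', log_two_mul_fD hγ0 hγβ hγβ', gBound]
  split_ifs with h1 h2
  · rw [log_two_mul_fA (by linarith) (by linarith)]
    linarith [pairEntropy_add_le_of_le hα0 hγ0 hγ1 hαβ hαβ' hγβ hγβ' h1]
  · rw [mul_sub, log_two_mul_binEnt, log_two_mul_binEnt]
    linarith [pairEntropy_le_add hγ0 hγβ hγβ', pairEntropy_le_two_mul hα0 hαβ hαβ']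
  · have hα : 1 / 2 ≤ α := by linarith
    rw [log_two_mul_fA (by linarith) (by linarith), binEntropy_one_sub]
    linarith [pairEntropy_le_pairEntropy_one_sub hα hα1 hαβ hαβ',
      pairEntropy_add_le_of_le (α := 1 - α) (by linarith) hγ0 hγ1 (by linarith) (by linarith)
        hγβ hγβ' (by linarith)]
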